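/- arXiv:2405.02776 — 2 statements merged into one kernel-verified Lean document; each statement's English description precedes it below -/
import Mathlib

section
/- The infinite series identity 91√3/16 = Σ_{k=0}^{∞} (1/4)^k · [(1/2)_k (4/3)_k (5/3)_k] / [(1)_k (19/12)_k (25/12)_k] · (9k + 8) holds, where the sum is over natural numbers k and all quantities are real numbers. -/
noncomputable def risingFactorial (a : ℝ) (k : ℕ) : ℝ := ∏ i ∈ Finset.range k, (a + i)

open Filter Topology

theorem rf_zero (a : ℝ) : risingFactorial a 0 = 1 := by simp [risingFactorial]

theorem rf_succ (a : ℝ) (k : ℕ) :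
    risingFactorial a (k + 1) = risingFactorial a k * (a + k) := by
  simp [risingFactorial, Finset.prod_range_succ]

theorem rf_pos {a : ℝ} (ha : 0 < a) (k : ℕ) : 0 < risingFactorial a k := by
  unfold risingFactorial
  exact Finset.prod_pos fun i _ => by positivity

theorem rf_shift (a : ℝ) (k : ℕ) :
    a * risingFactorial (a + 1) k = risingFactorial a k * (a + k) := by
  induction k with
  | zero => simp [rf_zero]
  | succ k ih =>
    rw [rf_succ, rf_succ, ← mul_assoc, ih]; push_cast; ring

/-- the hypergeometric part of the summand, with a free parameter `d` -/
noncomputable def hypH (d : ℝ) (k : ℕ) : ℝ :=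
  (1/4 : ℝ) ^ k * (risingFactorial (1/2) k * risingFactorial d k * risingFactorial (2 * d - 1) k) /
    (risingFactorial 1 k * risingFactorial (d + 1/4) k * risingFactorial (d + 3/4) k)

theorem hypH_zero (d : ℝ) : hypH d 0 = 1 := by simp [hypH, rf_zero]

theorem hypH_pos {d : ℝ} (hd : 1 ≤ d) (k : ℕ) : 0 < hypH d k := by
  unfold hypH
  have h1 := rf_pos (a := 1/2) (by norm_num) k
  have h2 := rf_pos (a := d) (by linarith) k
  have h3 := rf_pos (a := 2 * d - 1) (by linarith) k
  have h4 := rf_pos (a := 1) (by norm_num) k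
  have h5 := rf_pos (a := d + 1/4) (by linarith) k
  have h6 := rf_pos (a := d + 3/4) (by linarith) k
  positivity

theorem hypH_succ {d : ℝ} (hd : 1 ≤ d) (k : ℕ) :
    hypH d (k + 1) = hypH d k * ((k + 1/2) * (d + k) * (2 * d - 1 + k) /
      (4 * (k + 1) * (d + 1/4 + k) * (d + 3/4 + k))) := by
  unfold hypH
  have h4 := (rf_pos (a := 1) (by norm_num) k).ne'
  have h5 := (rf_pos (a := d + 1/4) (by linarith) k).ne'
  have h6 := (rf_pos (a := d + 3/4) (by linarith) k).ne'
  have hk : (0 : ℝ) ≤ k := k.cast_nonneg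
  have e1 : (1 : ℝ) + k ≠ 0 := by positivity
  have e1' : (k : ℝ) + 1 ≠ 0 := by positivity
  have e2 : d + 1/4 + k ≠ 0 := by positivity
  have e3 : d + 3/4 + k ≠ 0 := by positivity
  simp only [rf_succ, pow_succ]
  rw [div_mul_div_comm, div_eq_div_iff (by positivity) (by positivity)]
  ring

theorem hypH_shift {d : ℝ} (hd : 1 ≤ d) (k : ℕ) :
    hypH (d + 1) k = hypH d k * ((d + k) * ((2 * d - 1 + k) * (2 * d + k)) *
      ((d + 1/4) * (d + 3/4)) /
      (d * ((2 * d - 1) * (2 * d)) * ((d + 1/4 + k) * (d + 3/4 + k)))) := by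
  have s1 := rf_shift d k
  have s2 := rf_shift (2 * d - 1) k
  have s3 := rf_shift (2 * d) k
  have s4 := rf_shift (d + 1/4) k
  have s5 := rf_shift (d + 3/4) k
  rw [show 2 * d - 1 + 1 = 2 * d by ring] at s2
  have hk : (0 : ℝ) ≤ k := k.cast_nonneg
  have p4 := (rf_pos (a := 1) (by norm_num) k).ne'
  have p5 := (rf_pos (a := d + 1/4) (by linarith) k).ne'
  have p6 := (rf_pos (a := d + 3/4) (by linarith) k).ne'
  have q1 : d ≠ 0 := by positivity
  have q2 : 2 * d - 1 ≠ 0 := by linarith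
  have q3 : 2 * d ≠ 0 := by positivity
  have q4 : d + 1/4 ≠ 0 := by positivity
  have q5 : d + 3/4 ≠ 0 := by positivity
  have q6 : d + 1/4 + k ≠ 0 := by positivity
  have q7 : d + 3/4 + k ≠ 0 := by positivity
  have t1 : risingFactorial (d + 1) k = risingFactorial d k * (d + k) / d := by
    rw [eq_div_iff q1, ← s1]; ring
  have t2 : risingFactorial (2 * (d + 1) - 1) k =
      risingFactorial (2 * d - 1) k * ((2 * d - 1 + k) * (2 * d + k)) / ((2 * d - 1) * (2 * d)) := by
    rw [eq_div_iff (mul_ne_zero q2 q3), show 2 * (d + 1) - 1 = 2 * d + 1 by ring]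
    linear_combination (2 * d - 1) * s3 + (2 * d + k) * s2
  have t4 : risingFactorial (d + 1 + 1/4) k =
      risingFactorial (d + 1/4) k * (d + 1/4 + k) / (d + 1/4) := by
    rw [eq_div_iff q4, ← s4, show d + 1 + 1/4 = d + 1/4 + 1 by ring]; ring
  have t5 : risingFactorial (d + 1 + 3/4) k =
      risingFactorial (d + 3/4) k * (d + 3/4 + k) / (d + 3/4) := by
    rw [eq_div_iff q5, ← s5, show d + 1 + 3/4 = d + 3/4 + 1 by ring]; ring
  unfold hypH
  rw [t1, t2, t4, t5]
  generalize risingFactorial d k = A at *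
  generalize risingFactorial (2 * d - 1) k = B at *
  generalize risingFactorial (d + 1/4) k = C at *
  generalize risingFactorial (d + 3/4) k = D at *
  generalize risingFactorial 1 k = E at *
  generalize risingFactorial (1/2) k = F at *
  generalize d + 1/4 + (k:ℝ) = u at *
  generalize d + 3/4 + (k:ℝ) = v at *
  generalize d + 1/4 = u' at *
  generalize d + 3/4 = v' at *
  generalize 2 * d - 1 = w at *
  field_simp

theorem hypH_succ_le {d : ℝ} (hd : 1 ≤ d) (k : ℕ) : hypH d (k + 1) ≤ hypH d k * (1/2) := by
  rw [hypH_succ hd]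
  have hk : (0 : ℝ) ≤ k := k.cast_nonneg
  refine mul_le_mul_of_nonneg_left ?_ (hypH_pos hd k).le
  rw [div_le_div_iff₀ (by positivity) (by norm_num)]
  have a1 : (k + 1/2 : ℝ) * ((d + k) * (2 * d - 1 + k)) ≤
      (k + 1) * ((d + k) * (2 * (d + k))) := by
    have : 0 ≤ 2 * d - 1 + k := by linarith
    gcongr <;> linarith
  have a2 : (k + 1 : ℝ) * ((d + k) * (2 * (d + k))) ≤
      (k + 1) * ((d + 1/4 + k) * (2 * (d + 3/4 + k))) := by
    gcongr <;> linarith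
  nlinarith

theorem hypH_le {d : ℝ} (hd : 1 ≤ d) (k : ℕ) : hypH d k ≤ (1/2) ^ k := by
  induction k with
  | zero => simp [hypH_zero]
  | succ k ih =>
    rw [pow_succ]
    exact (hypH_succ_le hd k).trans (by gcongr)

theorem summable_bound : Summable fun k : ℕ => (1/2 : ℝ) ^ k * (3 * k + 1) := by
  have h1 := summable_pow_mul_geometric_of_norm_lt_one (R := ℝ) 1 (r := 1/2) (by norm_num)
  have h2 := summable_geometric_of_norm_lt_one (x := (1/2 : ℝ)) (by norm_num)
  refine ((h1.mul_left 3).add h2).congr fun k => ?_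
  simp; ring

theorem term_bound {d : ℝ} (hd : 1 ≤ d) (k : ℕ) :
    ‖hypH d k * (3 * k + 2 * d) / (2 * d)‖ ≤ (1/2 : ℝ) ^ k * (3 * k + 1) := by
  have hp := hypH_pos hd k
  rw [Real.norm_of_nonneg (by positivity), mul_div_assoc]
  have hk : (0 : ℝ) ≤ k := k.cast_nonneg
  gcongr
  · exact hypH_le hd k
  · rw [div_le_iff₀ (by positivity)]; nlinarith

theorem term_summable {d : ℝ} (hd : 1 ≤ d) : Summable fun k : ℕ => hypH d k * (3 * k + 2 * d) := by
  have := (Summable.of_norm_bounded summable_bound (term_bound hd)).mul_right (2 * d)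
  refine this.congr fun k => ?_
  field_simp

noncomputable def hypS (d : ℝ) : ℝ := ∑' k : ℕ, hypH d k * (3 * k + 2 * d)

theorem telescoped {d : ℝ} (hd : 1 ≤ d) (k : ℕ) :
    d ^ 2 / ((d + 1/4) * (d + 3/4)) * (hypH (d + 1) k * (3 * k + 2 * (d + 1)))
      - hypH d k * (3 * k + 2 * d) =
    -(((k + 1 : ℕ) : ℝ) * (2 * ((k + 1 : ℕ) : ℝ) + 1) / (2 * d - 1) * hypH d (k + 1)) -
    -((k : ℝ) * (2 * k + 1) / (2 * d - 1) * hypH d k) := by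
  rw [hypH_shift hd, hypH_succ hd]
  have hk : (0 : ℝ) ≤ k := k.cast_nonneg
  have q2 : 2 * d - 1 ≠ 0 := by linarith
  have q4 : d + 1/4 ≠ 0 := by positivity
  have q5 : d + 3/4 ≠ 0 := by positivity
  have q6 : d + 1/4 + k ≠ 0 := by positivity
  have q7 : d + 3/4 + k ≠ 0 := by positivity
  have q8 : (k : ℝ) + 1 ≠ 0 := by positivity
  have q9 : d ≠ 0 := by positivity
  generalize hypH d k = h
  push_cast
  have e1 : d ^ 2 / ((d + 1/4) * (d + 3/4)) * (h * ((d + k) * ((2 * d - 1 + k) * (2 * d + k)) *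
      ((d + 1/4) * (d + 3/4)) /
      (d * ((2 * d - 1) * (2 * d)) * ((d + 1/4 + k) * (d + 3/4 + k)))) * (3 * k + 2 * (d + 1))) =
      h * ((d + k) * ((2 * d - 1 + k) * (2 * d + k)) * (3 * k + 2 * (d + 1))) /
      (2 * (2 * d - 1) * ((d + 1/4 + k) * (d + 3/4 + k))) := by
    generalize d + 1/4 + (k:ℝ) = u at *
    generalize d + 3/4 + (k:ℝ) = v at *
    generalize d + 1/4 = u' at *
    generalize d + 3/4 = v' at *
    generalize 2 * d - 1 = w at *
    field_simp
  have e2 : ((k : ℝ) + 1) * (2 * (k + 1) + 1) / (2 * d - 1) * (h * ((k + 1/2) * (d + k) * (2 * d - 1 + k) /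
      (4 * (k + 1) * (d + 1/4 + k) * (d + 3/4 + k)))) =
      h * ((2 * (k + 1) + 1) * ((k + 1/2) * (d + k) * (2 * d - 1 + k))) /
      (4 * (2 * d - 1) * ((d + 1/4 + k) * (d + 3/4 + k))) := by
    generalize d + 1/4 + (k:ℝ) = u at *
    generalize d + 3/4 + (k:ℝ) = v at *
    generalize 2 * d - 1 = w at *
    field_simp
  rw [e1, e2]
  set u := d + 1/4 + (k:ℝ) with hu
  set v := d + 3/4 + (k:ℝ) with hv
  set w := 2 * d - 1 with hw
  field_simp
  rw [hu, hv, hw]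
  ring

theorem hypS_rec {d : ℝ} (hd : 1 ≤ d) :
    d ^ 2 / ((d + 1/4) * (d + 3/4)) * hypS (d + 1) = hypS d := by
  have s1 := (term_summable (d := d + 1) (by linarith)).mul_left (d ^ 2 / ((d + 1/4) * (d + 3/4)))
  have s0 := term_summable hd
  have hs := (s1.sub s0).hasSum.tendsto_sum_nat
  simp only [telescoped hd] at hs
  simp only [Finset.sum_range_sub (fun k : ℕ => -((k : ℝ) * (2 * k + 1) / (2 * d - 1) * hypH d k))] at hs
  have hz : Tendsto (fun n : ℕ => -((n : ℝ) * (2 * n + 1) / (2 * d - 1) * hypH d n)) atTop (𝓝 0) := by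
    have h2 := tendsto_pow_const_mul_const_pow_of_abs_lt_one 2 (r := (1/2 : ℝ))
      (by rw [abs_of_pos] <;> norm_num)
    have h1 := tendsto_pow_const_mul_const_pow_of_abs_lt_one 1 (r := (1/2 : ℝ))
      (by rw [abs_of_pos] <;> norm_num)
    have h3 := (h2.const_mul 2).add h1
    simp only [mul_zero, add_zero] at h3
    refine squeeze_zero_norm (fun n => ?_) h3
    have hp := hypH_pos hd n
    have : 0 < 2 * d - 1 := by linarith
    rw [norm_neg, Real.norm_of_nonneg (by positivity)]
    calc (n : ℝ) * (2 * n + 1) / (2 * d - 1) * hypH d n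
        ≤ (n : ℝ) * (2 * n + 1) * (1/2) ^ n := by
          have := hypH_le hd n
          gcongr
          exact div_le_self (by positivity) (by linarith)
      _ = _ := by ring
  have hz' := hz.sub_const (-(((0 : ℕ) : ℝ) * (2 * ((0 : ℕ) : ℝ) + 1) / (2 * d - 1) * hypH d 0))
  have := tendsto_nhds_unique hs hz'
  rw [← tsum_congr (telescoped hd), s1.tsum_sub s0, tsum_mul_left] at this
  simp at this
  unfold hypS
  simp only [one_div]
  linarith

theorem hypS_iter {d : ℝ} (hd : 1 ≤ d) (n : ℕ) :
    hypS d = risingFactorial d n ^ 2 / (risingFactorial (d + 1/4) n * risingFactorial (d + 3/4) n)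
      * hypS (d + n) := by
  induction n with
  | zero => simp [rf_zero]
  | succ n ih =>
    have hn : (0 : ℝ) ≤ n := n.cast_nonneg
    rw [ih, ← hypS_rec (d := d + n) (by linarith), rf_succ, rf_succ, rf_succ, ← mul_assoc]
    push_cast
    rw [div_mul_div_comm, ← add_assoc]
    congr 2 <;> ring

theorem hypH_limit (d : ℝ) (hd : 1 ≤ d) (k : ℕ) :
    Tendsto (fun n : ℕ => hypH (d + n) k) atTop
      (𝓝 (risingFactorial (1/2) k / risingFactorial 1 k * (1/2) ^ k)) := by
  have hinv : Tendsto (fun n : ℕ => (d + n)⁻¹) atTop (𝓝 0) :=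
    (tendsto_atTop_add_const_left _ d tendsto_natCast_atTop_atTop).inv_tendsto_atTop
  induction k with
  | zero => simp [hypH_zero, rf_zero]
  | succ k ih =>
    have hk : (0 : ℝ) ≤ k := k.cast_nonneg
    have key : Tendsto (fun n : ℕ => (k + 1/2 : ℝ) * (1 + k * (d + n)⁻¹) * (2 + (k - 1) * (d + n)⁻¹) /
        (4 * (k + 1) * (1 + (1/4 + k) * (d + n)⁻¹) * (1 + (3/4 + k) * (d + n)⁻¹))) atTop
        (𝓝 ((k + 1/2 : ℝ) * (1 + k * 0) * (2 + (k - 1) * 0) /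
        (4 * (k + 1) * (1 + (1/4 + k) * 0) * (1 + (3/4 + k) * 0)))) := by
      refine Tendsto.div ?_ ?_ ?_
      · exact (tendsto_const_nhds.mul (tendsto_const_nhds.add (hinv.const_mul _))).mul
          (tendsto_const_nhds.add (hinv.const_mul _))
      · exact (tendsto_const_nhds.mul (tendsto_const_nhds.add (hinv.const_mul _))).mul
          (tendsto_const_nhds.add (hinv.const_mul _))
      · simp; positivity
    have := ih.mul key
    convert this using 2 with n
    · have hn : (0 : ℝ) ≤ n := n.cast_nonneg
      rw [hypH_succ (by linarith)]
      congr 1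
      have : d + n ≠ 0 := by positivity
      set x := d + (n : ℝ) with hx
      have hx0 : 0 < x := by positivity
      have q6 : x + 1/4 + k ≠ 0 := by positivity
      have q7 : x + 3/4 + k ≠ 0 := by positivity
      have r1 : 1 + k * x⁻¹ = (x + k) / x := by field_simp
      have r2 : 2 + (k - 1) * x⁻¹ = (2 * x - 1 + k) / x := by field_simp; ring
      have r3 : 1 + (1/4 + k) * x⁻¹ = (x + 1/4 + k) / x := by field_simp; ring
      have r4 : 1 + (3/4 + k) * x⁻¹ = (x + 3/4 + k) / x := by field_simp; ring
      rw [r1, r2, r3, r4]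
      generalize x + 1/4 + (k:ℝ) = u at *
      generalize x + 3/4 + (k:ℝ) = v at *
      field_simp
    · have p := (rf_pos (a := 1) (by norm_num) k).ne'
      rw [rf_succ, rf_succ, pow_succ]
      have : (1 : ℝ) + k ≠ 0 := by positivity
      have : (k : ℝ) + 1 ≠ 0 := by positivity
      field_simp
      ring

theorem binom_sum : ∑' k : ℕ, risingFactorial (1/2) k / risingFactorial 1 k * (1/2) ^ k = √2 := by
  have h := (Real.one_div_one_sub_rpow_hasFPowerSeriesOnBall_zero (1/2)).hasSum
    (y := (1/2 : ℝ)) (by simp [enorm_eq_nnnorm])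
  have hv : 1 / (1 - (0 + 1/2 : ℝ)) ^ (1/2 : ℝ) = √2 := by
    rw [← Real.sqrt_eq_rpow, show (1 - (0 + 1/2 : ℝ)) = 2⁻¹ by norm_num, Real.sqrt_inv]
    simp
  rw [hv] at h
  rw [← h.tsum_eq]
  refine tsum_congr fun k => ?_
  have hc : Ring.choose ((1/2 : ℝ) + k - 1) k = risingFactorial (1/2) k / risingFactorial 1 k := by
    have hf : risingFactorial 1 k = (k.factorial : ℝ) := by
      induction k with
      | zero => simp [rf_zero]
      | succ k ih => rw [rf_succ, ih, Nat.factorial_succ]; push_cast; ring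
    have hd : (descPochhammer ℝ k).eval ((1/2 : ℝ) + k - 1) = risingFactorial (1/2) k := by
      rw [descPochhammer_eval_eq_prod_range, risingFactorial, ← Finset.prod_range_reflect]
      refine Finset.prod_congr rfl fun i hi => ?_
      rw [Finset.mem_range] at hi
      rw [Nat.cast_sub (by omega), Nat.cast_sub (by omega)]
      push_cast; ring
    rw [Ring.choose_eq_smul, hf, ← hd]
    rw [← Polynomial.aeval_eq_smeval, ← descPochhammer_map (Int.castRingHom ℝ), Polynomial.eval_map,
      Polynomial.aeval_def, div_eq_inv_mul _ (k.factorial : ℝ), smul_eq_mul]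
    rfl
  rw [← hc]
  simp [mul_comm]

theorem hypS_limit (d : ℝ) (hd : 1 ≤ d) :
    Tendsto (fun n : ℕ => hypS (d + n) / (2 * (d + n))) atTop (𝓝 (√2)) := by
  have hinv : Tendsto (fun n : ℕ => (d + n)⁻¹) atTop (𝓝 0) :=
    (tendsto_atTop_add_const_left _ d tendsto_natCast_atTop_atTop).inv_tendsto_atTop
  rw [← binom_sum]
  have := tendsto_tsum_of_dominated_convergence (𝓕 := atTop)
    (f := fun (n k : ℕ) => hypH (d + n) k * (3 * k + 2 * (d + n)) / (2 * (d + n)))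
    (g := fun k => risingFactorial (1/2) k / risingFactorial 1 k * (1/2) ^ k)
    summable_bound ?_ ?_
  · refine this.congr fun n => ?_
    rw [tsum_div_const, hypS]
  · intro k
    have h := (hypH_limit d hd k).mul ((hinv.const_mul (3 * (k : ℝ) / 2)).add_const 1)
    simp only [mul_zero, zero_add, mul_one] at h
    refine h.congr fun n => ?_
    have : d + n ≠ 0 := by positivity
    field_simp
  · refine Eventually.of_forall fun n k => ?_
    exact term_bound (by have : (0 : ℝ) ≤ n := n.cast_nonneg
                         linarith) k

theorem hypS_value {d : ℝ} (hd : 1 ≤ d) :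
    hypS d = 2 * √2 * (Real.Gamma (d + 1/4) * Real.Gamma (d + 3/4) / Real.Gamma d ^ 2) := by
  have g1 := Real.GammaSeq_tendsto_Gamma (d + 1/4)
  have g2 := Real.GammaSeq_tendsto_Gamma (d + 3/4)
  have g3 := Real.GammaSeq_tendsto_Gamma d
  have hg := (g1.mul g2).div (g3.pow 2) (by have := Real.Gamma_pos_of_pos (s := d) (by linarith); positivity)
  have hl := ((hypS_limit d hd).comp (tendsto_add_atTop_nat 1))
  have hr : Tendsto (fun n : ℕ => 2 * (1 + (d + 1) * ((n : ℝ))⁻¹)) atTop (𝓝 (2 * (1 + (d + 1) * 0))) :=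
    ((tendsto_inv_atTop_nhds_zero_nat (𝕜 := ℝ)).const_mul (d+1)).const_add 1 |>.const_mul 2
  have hall := (hr.mul hl).mul hg
  have hc : Tendsto (fun _ : ℕ => hypS d) atTop (𝓝 (hypS d)) := tendsto_const_nhds
  have := tendsto_nhds_unique (hc.congr' ?_) hall
  · rw [this]; ring
  · filter_upwards [eventually_gt_atTop 0] with n hn
    have hn' : (0 : ℝ) < n := by exact_mod_cast hn
    have p1 := (rf_pos (a := d) (by linarith) (n+1)).ne'
    have p2 := (rf_pos (a := d + 1/4) (by linarith) (n+1)).ne'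
    have p3 := (rf_pos (a := d + 3/4) (by linarith) (n+1)).ne'
    have hfac : (n.factorial : ℝ) ≠ 0 := by positivity
    have hp : (n : ℝ) ^ (d + 1/4) * (n : ℝ) ^ (d + 3/4) = ((n : ℝ) ^ d) ^ 2 * n := by
      rw [← Real.rpow_add hn', ← Real.rpow_natCast, ← Real.rpow_mul hn'.le,
        ← Real.rpow_add_one hn'.ne']
      congr 1; push_cast; ring
    have hnd : (n : ℝ) ^ d ≠ 0 := (Real.rpow_pos_of_pos hn' d).ne'
    have hG : Real.GammaSeq (d + 1/4) n * Real.GammaSeq (d + 3/4) n / Real.GammaSeq d n ^ 2 =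
        n * (risingFactorial d (n+1) ^ 2 /
          (risingFactorial (d + 1/4) (n+1) * risingFactorial (d + 3/4) (n+1))) := by
      simp only [Real.GammaSeq]
      change (n : ℝ) ^ (d + 1/4) * n.factorial / risingFactorial (d + 1/4) (n+1) *
        ((n : ℝ) ^ (d + 3/4) * n.factorial / risingFactorial (d + 3/4) (n+1)) /
        ((n : ℝ) ^ d * n.factorial / risingFactorial d (n+1)) ^ 2 = _
      generalize risingFactorial d (n+1) = A at *
      generalize risingFactorial (d + 1/4) (n+1) = B at *
      generalize risingFactorial (d + 3/4) (n+1) = C at *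
      generalize (n : ℝ) ^ (d + 1/4) = X at *
      generalize (n : ℝ) ^ (d + 3/4) = Y at *
      generalize (n : ℝ) ^ d = Z at *
      field_simp
      linear_combination hp
    simp only [Function.comp_apply]
    have e := hypS_iter hd (n + 1)
    change hypS d = _ * (Real.GammaSeq (d + 1/4) n * Real.GammaSeq (d + 3/4) n / Real.GammaSeq d n ^ 2)
    rw [hG, e]
    generalize hypS (d + ((n + 1 : ℕ) : ℝ)) = T
    generalize risingFactorial d (n+1) ^ 2 /
          (risingFactorial (d + 1/4) (n+1) * risingFactorial (d + 3/4) (n+1)) = Q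
    push_cast
    have : d + (n + 1) ≠ 0 := by positivity
    field_simp
    ring

theorem gamma_value :
    2 * √2 * (Real.Gamma (4/3 + 1/4) * Real.Gamma (4/3 + 3/4) / Real.Gamma (4/3) ^ 2)
      = 91 * √3 / 48 := by
  have d1 := Real.Gamma_mul_Gamma_add_half (4/3 + 1/4)
  have d2 := Real.Gamma_mul_Gamma_add_half (1/6)
  have r := Real.Gamma_mul_Gamma_one_sub (1/3)
  have a1 := Real.Gamma_add_one (s := 1/3) (by norm_num)
  have b1 := Real.Gamma_add_one (s := 1/6) (by norm_num)
  have b2 := Real.Gamma_add_one (s := 7/6) (by norm_num)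
  have b3 := Real.Gamma_add_one (s := 13/6) (by norm_num)
  norm_num at d1 d2 r a1 b1 b2 b3
  rw [show Real.pi * (1/3) = Real.pi / 3 by ring, Real.sin_pi_div_three] at r
  norm_num
  rw [d1, b3, b2, b1, a1]
  have g1 := Real.Gamma_pos_of_pos (s := 1/3) (by norm_num)
  have g2 := Real.Gamma_pos_of_pos (s := 2/3) (by norm_num)
  have g3 := Real.Gamma_pos_of_pos (s := 1/6) (by norm_num)
  have hpi := Real.pi_pos
  have hsq : √Real.pi * √Real.pi = Real.pi := Real.mul_self_sqrt hpi.le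
  have h3 : √3 * √3 = 3 := Real.mul_self_sqrt (by norm_num)
  have hpow : √2 * (2 : ℝ) ^ (-(13/6) : ℝ) * (2 : ℝ) ^ (2/3 : ℝ) = 1/2 := by
    rw [Real.sqrt_eq_rpow, ← Real.rpow_add two_pos, ← Real.rpow_add two_pos,
      show (1/2 + -(13/6) + 2/3 : ℝ) = -1 by norm_num, Real.rpow_neg_one]
    norm_num
  have hr3 : √3 * (Real.Gamma (1/3) * Real.Gamma (2/3)) = 2 * Real.pi := by
    rw [r]; field_simp
  have key : 4 * (√2 * (2 : ℝ) ^ (-(13/6) : ℝ) * Real.Gamma (1/6) * √Real.pi)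
      = √3 * Real.Gamma (1/3) ^ 2 := by
    apply mul_right_cancel₀ g2.ne'
    generalize (2 : ℝ) ^ (-(13/6) : ℝ) = a at *
    generalize (2 : ℝ) ^ (2/3 : ℝ) = b at *
    generalize Real.Gamma (1/6) = P at *
    generalize Real.Gamma (1/3) = Q at *
    generalize Real.Gamma (2/3) = R at *
    linear_combination (4 * √2 * a * √Real.pi) * d2 + 4 * √2 * a * b * Q * hsq
      + 4 * Q * Real.pi * hpow - Q * hr3
  field_simp
  linear_combination 19656 * key

theorem stmt_3 :
    91 * Real.sqrt 3 / 16 =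
      ∑' k : ℕ, (1/4 : ℝ) ^ k * (risingFactorial (1/2) k * risingFactorial (4/3) k * risingFactorial (5/3) k) /
        (risingFactorial (1) k * risingFactorial (19/12) k * risingFactorial (25/12) k) * (9 * (k:ℝ) + 8) := by
  have h := hypS_value (d := 4/3) (by norm_num)
  rw [gamma_value] at h
  have h2 : 91 * Real.sqrt 3 / 16 = hypS (4/3) * 3 := by rw [h]; ring
  rw [h2, hypS, ← tsum_mul_right]
  refine tsum_congr fun k => ?_
  rw [hypH, show (2 * (4/3) - 1 : ℝ) = 5/3 by norm_num, show (4/3 + 1/4 : ℝ) = 19/12 by norm_num,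
    show (4/3 + 3/4 : ℝ) = 25/12 by norm_num]
  ring
end

section
/- The infinite series identity 6π² = Σ_{k=0}^{∞} (1/64)^k · [(1)_k (1)_k] / [(5/4)_k (7/4)_k] · (189k² + 297k + 118) / ((3k + 1)(3k + 2)) holds, where the sum is over natural numbers k and all quantities are real numbers. -/
open Filter Topology

/-- Numerator of the WZ certificate. -/
noncomputable def wzQ (n k : ℝ) : ℝ :=
    (1416*n^0 + 17016*n^1 + 87102*n^2 + 248970*n^3 + 435912*n^4 + 479844*n^5 + 324918*n^6 + 123930*n^7 + 20412*n^8)*k^0 +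
    (3128*n^0 + 32336*n^1 + 140005*n^2 + 330028*n^3 + 458478*n^4 + 376056*n^5 + 168885*n^6 + 32076*n^7)*k^1 +
    (2808*n^0 + 24496*n^1 + 87211*n^2 + 162564*n^3 + 167646*n^4 + 90828*n^5 + 20223*n^6)*k^2 +
    (1252*n^0 + 8996*n^1 + 25328*n^2 + 35008*n^3 + 23796*n^4 + 6372*n^5)*k^3 +
    (276*n^0 + 1580*n^1 + 3308*n^2 + 3012*n^3 + 1008*n^4)*k^4 +
    (24*n^0 + 104*n^1 + 144*n^2 + 64*n^3)*k^5

/-- First member of the WZ pair. -/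
noncomputable def wzF (n k : ℕ) : ℝ :=
  (n.factorial : ℝ)^2 * ((3*n).factorial : ℝ)^2 *
    (((2*n+k).factorial : ℝ) * (k.factorial : ℝ)) /
    (((4*n).factorial : ℝ) * ((3*n+1+k).factorial : ℝ)^2)

noncomputable def wzR (n k : ℝ) : ℝ :=
  wzQ n k / ((4*n+1)*(4*n+2)*(4*n+3)*(4*n+4)*((3*n+2+k)*(3*n+3+k))^2)

/-- Second member of the WZ pair. -/
noncomputable def wzG (n k : ℕ) : ℝ := wzF n k * wzR n k

noncomputable def wzA (n k : ℝ) : ℝ :=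
  (n+1)^2*((3*n+1)*(3*n+2)*(3*n+3))^2*((2*n+k+1)*(2*n+k+2)) /
    ((4*n+1)*(4*n+2)*(4*n+3)*(4*n+4)*((3*n+2+k)*(3*n+3+k)*(3*n+4+k))^2)

lemma wzF_pos (n k : ℕ) : 0 < wzF n k := by
  unfold wzF
  positivity

lemma wzQ_nonneg (n k : ℕ) : 0 ≤ wzQ n k := by
  unfold wzQ
  positivity

lemma wzF_succ_left (n k : ℕ) : wzF (n+1) k = wzF n k * wzA n k := by
  unfold wzF wzA
  have e1 : 3*(n+1) = 3*n+1+1+1 := by ring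
  have e2 : 4*(n+1) = 4*n+1+1+1+1 := by ring
  have e3 : 2*(n+1)+k = 2*n+k+1+1 := by ring
  have e4 : 3*(n+1)+1+k = 3*n+1+k+1+1+1 := by ring
  rw [e4, e1, e2, e3]
  simp only [Nat.factorial_succ (3*n+1+k+1+1), Nat.factorial_succ (3*n+1+k+1),
    Nat.factorial_succ (3*n+1+k), Nat.factorial_succ (3*n+1+1), Nat.factorial_succ (3*n+1),
    Nat.factorial_succ (3*n), Nat.factorial_succ (4*n+1+1+1), Nat.factorial_succ (4*n+1+1),
    Nat.factorial_succ (4*n+1), Nat.factorial_succ (4*n), Nat.factorial_succ (2*n+k+1),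
    Nat.factorial_succ (2*n+k), Nat.factorial_succ n]
  have h1 := Nat.factorial_ne_zero (3*n+1+k)
  have h2 := Nat.factorial_ne_zero (4*n)
  generalize (3*n+1+k).factorial = a at *
  generalize (4*n).factorial = b at *
  generalize (3*n).factorial = c at *
  generalize (2*n+k).factorial = d at *
  push_cast
  have ha : (a:ℝ) ≠ 0 := by exact_mod_cast h1
  have hb : (b:ℝ) ≠ 0 := by exact_mod_cast h2
  rw [div_mul_div_comm,
    div_eq_div_iff (by positivity) (by positivity)]
  ring

lemma wzF_succ_right (n k : ℕ) :
    wzF n (k+1) = wzF n k * ((2*n+k+1)*(k+1)/(3*n+2+k)^2) := by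
  unfold wzF
  have e3 : 2*n+(k+1) = 2*n+k+1 := by ring
  have e4 : 3*n+1+(k+1) = 3*n+1+k+1 := by ring
  rw [e4, e3]
  simp only [Nat.factorial_succ (3*n+1+k), Nat.factorial_succ (2*n+k), Nat.factorial_succ k]
  have h1 := Nat.factorial_ne_zero (3*n+1+k)
  have h2 := Nat.factorial_ne_zero (4*n)
  generalize (3*n+1+k).factorial = a at *
  generalize (4*n).factorial = b at *
  generalize (3*n).factorial = c at *
  generalize (2*n+k).factorial = d at *
  push_cast
  have ha : (a:ℝ) ≠ 0 := by exact_mod_cast h1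
  have hb : (b:ℝ) ≠ 0 := by exact_mod_cast h2
  rw [div_mul_div_comm,
    div_eq_div_iff (by positivity) (by positivity)]
  ring

lemma wz_rat (n k : ℝ) (hn : 0 ≤ n) (hk : 0 ≤ k) :
    1 - wzA n k = wzR n k - ((2*n+k+1)*(k+1)/(3*n+2+k)^2) * wzR n (k+1) := by
  have e : wzR n (k+1) = wzQ n (k+1) /
      ((4*n+1)*(4*n+2)*(4*n+3)*(4*n+4)*((3*n+3+k)*(3*n+4+k))^2) := by
    unfold wzR
    congr 1
    ring
  have key : (4*n+1)*(4*n+2)*(4*n+3)*(4*n+4)*((3*n+2+k)*(3*n+3+k)*(3*n+4+k))^2 -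
      (n+1)^2*((3*n+1)*(3*n+2)*(3*n+3))^2*((2*n+k+1)*(2*n+k+2)) =
      (3*n+4+k)^2 * wzQ n k - (2*n+k+1)*(k+1) * wzQ n (k+1) := by
    unfold wzQ
    ring
  rw [e]
  unfold wzR wzA
  generalize wzQ n k = q at *
  generalize wzQ n (k+1) = q' at *
  have h1 : (4*n+1)*(4*n+2)*(4*n+3)*(4*n+4) ≠ 0 := by positivity
  have h2 : 3*n+2+k ≠ 0 := by positivity
  have h3 : 3*n+3+k ≠ 0 := by positivity
  have h4 : 3*n+4+k ≠ 0 := by positivity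
  generalize (4*n+1)*(4*n+2)*(4*n+3)*(4*n+4) = p at *
  generalize 3*n+2+k = x at *
  generalize 3*n+3+k = y at *
  generalize 3*n+4+k = z at *
  field_simp
  linear_combination key

lemma wz_pair (n k : ℕ) : wzF n k - wzF (n+1) k = wzG n k - wzG n (k+1) := by
  unfold wzG
  rw [wzF_succ_left, wzF_succ_right]
  have := wz_rat n k (by positivity) (by positivity)
  push_cast
  linear_combination wzF n k * this

lemma wzA_le (n k : ℕ) : wzA n k ≤ 1/2 := by
  unfold wzA
  rw [div_le_iff₀ (by positivity)]
  generalize hx : (n:ℝ) = x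
  generalize hy : (k:ℝ) = y
  have x0 : 0 ≤ x := by rw [← hx]; positivity
  have y0 : 0 ≤ y := by rw [← hy]; positivity
  have a1 : 18*(x+1)^4 ≤ (4*x+1)*(4*x+2)*(4*x+3)*(4*x+4) := by
    have : 0 ≤ (4*x+1)*(4*x+2)*(4*x+3)*(4*x+4) - 18*(x+1)^4 := by
      ring_nf
      positivity
    linarith
  have a2 : (2*x+y+1)*(2*x+y+2) ≤ (3*x+4+y)^2 := by
    rw [sq]
    gcongr ?_ * ?_ <;> linarith
  have a3 : ((3*x+1)*(3*x+2))^2 ≤ ((3*x+2+y)*(3*x+3+y))^2 := by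
    gcongr ?_ ^ 2
    gcongr ?_ * ?_ <;> linarith
  have := mul_le_mul (mul_le_mul a1 a2 (by positivity) (by positivity)) a3 (by positivity)
    (by positivity)
  linarith

lemma wzF_zero (k : ℕ) : wzF 0 k = 1/((k:ℝ)+1)^2 := by
  unfold wzF
  have e4 : 3*0+1+k = k+1 := by ring
  rw [e4, Nat.factorial_succ]
  have := Nat.factorial_ne_zero k
  simp
  field_simp

lemma wzF_le (n k : ℕ) : wzF n k ≤ (1/2)^n * wzF 0 k := by
  induction n with
  | zero => simp
  | succ n ih =>
    rw [wzF_succ_left, pow_succ]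
    have h := wzA_le n k
    have := mul_le_mul_of_nonneg_left h (wzF_pos n k).le
    linarith

lemma wzF0_hasSum : HasSum (fun k => wzF 0 k) (Real.pi^2/6) := by
  have h := hasSum_zeta_two
  rw [← hasSum_nat_add_iff' 1] at h
  simpa [wzF_zero] using h

lemma wzF_summable (n : ℕ) : Summable (fun k => wzF n k) :=
  Summable.of_nonneg_of_le (fun k => (wzF_pos n k).le) (fun k => wzF_le n k)
    (wzF0_hasSum.summable.mul_left _)

lemma wzR_le (n : ℕ) : ∃ C : ℝ, ∀ k : ℕ, wzR n k ≤ C * (k+1) := by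
  refine ⟨wzQ n 1, fun k => ?_⟩
  have hq : wzQ n k ≤ wzQ n 1 * ((k:ℝ)+1)^5 := by
    have hp : ∀ e ≤ 5, (k:ℝ)^e ≤ ((k:ℝ)+1)^5 := fun e he =>
      (pow_le_pow_left₀ (by positivity) (by linarith) e).trans
        (pow_le_pow_right₀ (by linarith [(Nat.cast_nonneg k : (0:ℝ) ≤ k)]) he)
    have aux : ∀ c0 c1 c2 c3 c4 c5 : ℝ, 0 ≤ c0 → 0 ≤ c1 → 0 ≤ c2 → 0 ≤ c3 → 0 ≤ c4 → 0 ≤ c5 →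
        c0*(k:ℝ)^0 + c1*(k:ℝ)^1 + c2*(k:ℝ)^2 + c3*(k:ℝ)^3 + c4*(k:ℝ)^4 + c5*(k:ℝ)^5 ≤
        (c0*1^0 + c1*1^1 + c2*1^2 + c3*1^3 + c4*1^4 + c5*1^5) * ((k:ℝ)+1)^5 := by
      intro c0 c1 c2 c3 c4 c5 h0 h1 h2 h3 h4 h5
      have p0 := mul_le_mul_of_nonneg_left (hp 0 (by norm_num)) h0
      have p1 := mul_le_mul_of_nonneg_left (hp 1 (by norm_num)) h1
      have p2 := mul_le_mul_of_nonneg_left (hp 2 (by norm_num)) h2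
      have p3 := mul_le_mul_of_nonneg_left (hp 3 (by norm_num)) h3
      have p4 := mul_le_mul_of_nonneg_left (hp 4 (by norm_num)) h4
      have p5 := mul_le_mul_of_nonneg_left (hp 5 (by norm_num)) h5
      simp only [one_pow, mul_one, add_mul]
      linarith
    unfold wzQ
    apply aux <;> positivity
  unfold wzR
  have hq1 : 0 ≤ wzQ n 1 := by simpa using wzQ_nonneg n 1
  rw [div_le_iff₀ (by positivity)]
  refine hq.trans ?_
  have n0 : (0:ℝ) ≤ n := by positivity
  have k0 : (0:ℝ) ≤ k := by positivity
  have b1 : (1:ℝ) ≤ (4*n+1)*(4*n+2)*(4*n+3)*(4*n+4) := by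
    have : (0:ℝ) ≤ (4*n+1)*(4*n+2)*(4*n+3)*(4*n+4) - 1 := by
      ring_nf
      positivity
    linarith
  have b2 : (((k:ℝ)+1)*(k+1))^2 ≤ ((3*n+2+k)*(3*n+3+k))^2 := by
    gcongr ?_ ^ 2
    gcongr ?_ * ?_ <;> linarith
  have b3 := mul_le_mul b1 b2 (by positivity) (by positivity)
  have b4 := mul_le_mul_of_nonneg_left b3 (by positivity : 0 ≤ wzQ n 1 * ((k:ℝ)+1))
  linarith

lemma wzG_nonneg (n k : ℕ) : 0 ≤ wzG n k := by
  have := wzQ_nonneg n k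
  have := (wzF_pos n k).le
  unfold wzG wzR
  positivity

lemma wzG_tendsto (n : ℕ) : Tendsto (fun k => wzG n k) atTop (𝓝 0) := by
  obtain ⟨C, hC⟩ := wzR_le n
  have h : Tendsto (fun k : ℕ => C * (1/((k:ℝ)+1))) atTop (𝓝 0) := by
    simpa using tendsto_one_div_add_atTop_nhds_zero_nat.const_mul C
  refine squeeze_zero (fun k => wzG_nonneg n k) (fun k => ?_) h
  have h1 : wzF n k ≤ 1/((k:ℝ)+1)^2 := by
    rw [← wzF_zero]
    refine (wzF_le n k).trans ?_
    refine mul_le_of_le_one_left (wzF_pos 0 k).le ?_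
    exact pow_le_one₀ (by norm_num) (by norm_num)
  have hR : 0 ≤ wzR n k := by
    have := wzQ_nonneg n k
    unfold wzR
    positivity
  calc wzG n k = wzF n k * wzR n k := rfl
    _ ≤ 1/((k:ℝ)+1)^2 * (C * (k+1)) := by
      exact mul_le_mul h1 (hC k) hR (by positivity)
    _ = C * (1/((k:ℝ)+1)) := by
      field_simp

lemma wzS_succ (n : ℕ) : (∑' k, wzF n k) - (∑' k, wzF (n+1) k) = wzG n 0 := by
  rw [← (wzF_summable n).tsum_sub (wzF_summable (n+1))]
  have hs := (wzF_summable n).sub (wzF_summable (n+1))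
  have h1 := hs.hasSum.tendsto_sum_nat
  have h2 : Tendsto (fun N => ∑ k ∈ Finset.range N, (wzF n k - wzF (n+1) k)) atTop
      (𝓝 (wzG n 0 - 0)) := by
    simp only [wz_pair, Finset.sum_range_sub']
    exact (wzG_tendsto n).const_sub _
  rw [sub_zero] at h2
  exact tendsto_nhds_unique h1 h2

lemma wzS_tendsto : Tendsto (fun n => ∑' k, wzF n k) atTop (𝓝 0) := by
  have h : Tendsto (fun n : ℕ => (1/2:ℝ)^n * ∑' k, wzF 0 k) atTop (𝓝 0) := by
    simpa using (tendsto_pow_atTop_nhds_zero_of_lt_one (r := (1/2:ℝ)) (by norm_num)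
      (by norm_num)).mul_const (∑' k, wzF 0 k)
  refine squeeze_zero (fun n => tsum_nonneg fun k => (wzF_pos n k).le) (fun n => ?_) h
  rw [← tsum_mul_left]
  exact (wzF_summable n).tsum_le_tsum (fun k => wzF_le n k) (wzF0_hasSum.summable.mul_left _)

lemma wzG_hasSum : HasSum (fun n => wzG n 0) (Real.pi^2/6) := by
  rw [hasSum_iff_tendsto_nat_of_nonneg (fun n => wzG_nonneg n 0)]
  simp only [← wzS_succ]
  have e : ∀ N, ∑ n ∈ Finset.range N, ((∑' k, wzF n k) - (∑' k, wzF (n+1) k)) =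
      Real.pi^2/6 - ∑' k, wzF N k := fun N => by
    rw [Finset.sum_range_sub' (fun n => ∑' k, wzF n k), wzF0_hasSum.tsum_eq]
  simp only [e]
  simpa using wzS_tendsto.const_sub (Real.pi^2/6)

lemma risingFactorial_pos (a : ℝ) (ha : 0 < a) (k : ℕ) : 0 < risingFactorial a k := by
  unfold risingFactorial
  exact Finset.prod_pos fun i _ => by positivity

lemma wzF_zero_right (n : ℕ) :
    wzF n 0 = (1/64 : ℝ) ^ n * (risingFactorial (1) n * risingFactorial (1) n) /
        (risingFactorial (5/4) n * risingFactorial (7/4) n) *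
        ((4*n+1)*(4*n+3)/(3*(3*n+1)^2)) := by
  induction n with
  | zero => simp [wzF, risingFactorial]
  | succ n ih =>
    rw [wzF_succ_left, ih]
    have s : ∀ a, risingFactorial a (n+1) = risingFactorial a n * (a + n) := fun a => by
      unfold risingFactorial
      rw [Finset.prod_range_succ]
    simp only [s, pow_succ (1/64:ℝ)]
    have h1 := (risingFactorial_pos (5/4) (by norm_num) n).ne'
    have h2 := (risingFactorial_pos (7/4) (by norm_num) n).ne'
    generalize risingFactorial (5/4) n = u at *
    generalize risingFactorial (7/4) n = v at *
    generalize risingFactorial 1 n = w at *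
    generalize (1/64:ℝ)^n = z at *
    unfold wzA
    push_cast
    have n0 : (0:ℝ) ≤ n := by positivity
    generalize (n:ℝ) = x at *
    have q1 : (5/4:ℝ) + x ≠ 0 := by positivity
    have q2 : (7/4:ℝ) + x ≠ 0 := by positivity
    have q3 : (5/4:ℝ) + x = (4*x+5)/4 := by ring
    have q4 : (7/4:ℝ) + x = (4*x+7)/4 := by ring
    rw [q3, q4]
    field_simp
    ring

lemma wz_term (n : ℕ) : (1/64 : ℝ) ^ n * (risingFactorial (1) n * risingFactorial (1) n) /
        (risingFactorial (5/4) n * risingFactorial (7/4) n) *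
        ((189 * (n:ℝ)^2 + 297 * (n:ℝ) + 118) / ((3 * (n:ℝ) + 1) * (3 * (n:ℝ) + 2))) =
      36 * wzG n 0 := by
  unfold wzG
  rw [wzF_zero_right]
  generalize (1/64 : ℝ) ^ n * (risingFactorial (1) n * risingFactorial (1) n) /
        (risingFactorial (5/4) n * risingFactorial (7/4) n) = t
  have n0 : (0:ℝ) ≤ n := by positivity
  push_cast
  generalize (n:ℝ) = x at *
  unfold wzR wzQ
  rw [mul_assoc t, mul_left_comm]
  congr 1
  rw [div_mul_div_comm, mul_div_assoc', div_eq_div_iff (by positivity) (by positivity)]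
  ring

theorem stmt_8 :
    6 * Real.pi ^ 2 =
      ∑' k : ℕ, (1/64 : ℝ) ^ k * (risingFactorial (1) k * risingFactorial (1) k) /
        (risingFactorial (5/4) k * risingFactorial (7/4) k) * ((189 * (k:ℝ)^2 + 297 * (k:ℝ) + 118) / ((3 * (k:ℝ) + 1) * (3 * (k:ℝ) + 2))) := by
  rw [tsum_congr wz_term, (wzG_hasSum.mul_left 36).tsum_eq]
  ring
end
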